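/- arXiv:2509.14538 — 2 statements merged into one kernel-verified Lean document; each statement's English description precedes it below -/
import Mathlib

section
/- Let n ≥ 2, λ > 0, and let g = 4π ∑_{j=1}^{k₁} m_j δ_{p_j}, h = 4π ∑_{j=1}^{k₂} n_j δ_{q_j} with m_j, n_j ∈ ℕ. If (u, v) is a topological solution of the system Δu = λ e^v (e^u − 1) + g, Δv = λ e^u (e^v − 1) + h on ℤⁿ, then for every ε ∈ (0,1) there is a constant C(ε) > 0 such that |u(x)| ≤ C(ε) e^{−m(1−ε) d(x)} and |v(x)| ≤ C(ε) e^{−m(1−ε) d(x)} for all x ∈ ℤⁿ, where m = ln(1 + λ/(2n)). -/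
/-!
Since `e^t - 1 = t · φ t` with `φ = dslope exp 0` continuous and `φ 0 = 1`, away from the sources
each component solves a linear equation `Δu = V u` whose potential `V`, namely `λ e^v φ(u)` or
`λ e^u φ(v)`, tends to `λ`. If `a < ln (1 + λ / (2n))`, then `2n (e^a - 1) ≤ V` near infinity, and
`∑_{y ~ x} u y = (2n + V x) u x` shows that the mean of `|u|` over the `2n` neighbours of `x` is at
least `e^a |u x|`. Hence some neighbour `y` of `x` satisfies `|u x| ≤ e^{-a} |u y|`. Such a step
lowers the distance to the origin by at most one, so about `d(x)` of them can be chained before the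
region where `V` is not under control is reached; as `u` is bounded, `u = O(e^{-a d})`.
-/

open Filter Real

noncomputable section

namespace CS

abbrev Lat (n : ℕ) := Fin n → ℤ

/-- d(x) = ∑ᵢ |xᵢ|, the graph distance to the origin on ℤⁿ. -/
def latDist {n : ℕ} (x : Lat n) : ℕ := ∑ i, (x i).natAbs

/-- x ~ y iff ∑ᵢ |xᵢ − yᵢ| = 1. -/
def adjacent {n : ℕ} (x y : Lat n) : Prop := (∑ i, (x i - y i).natAbs) = 1

instance {n : ℕ} (x y : Lat n) : Decidable (adjacent x y) :=
  decidable_of_iff ((∑ i, (x i - y i).natAbs) = 1) Iff.rfl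

def unitVec {n : ℕ} (i : Fin n) : Lat n := fun j => if j = i then 1 else 0

/-- The graph Laplacian Δu(x) = ∑_{y ~ x} (u(y) − u(x)) on ℤⁿ. -/
def lapl {n : ℕ} (u : Lat n → ℝ) (x : Lat n) : ℝ :=
  ∑ i, (u (x + unitVec i) + u (x - unitVec i) - 2 * u x)

/-- The filter of neighborhoods of infinity (d(x) → +∞) on ℤⁿ. -/
def atInfty (n : ℕ) : Filter (Lat n) := Filter.comap latDist Filter.atTop

/-- The Dirac mass at p. -/
def dirac {n : ℕ} (p x : Lat n) : ℝ := if x = p then 1 else 0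

/-- (u,v) is a topological solution of Δu = λ eᵛ(eᵘ−1) + g, Δv = λ eᵘ(eᵛ−1) + h
with u, v → 0 at infinity. -/
def IsTopSol {n : ℕ} (lam : ℝ) (g h u v : Lat n → ℝ) : Prop :=
  (∀ x, lapl u x = lam * Real.exp (v x) * (Real.exp (u x) - 1) + g x) ∧
  (∀ x, lapl v x = lam * Real.exp (u x) * (Real.exp (v x) - 1) + h x) ∧
  Filter.Tendsto u (atInfty n) (nhds 0) ∧
  Filter.Tendsto v (atInfty n) (nhds 0)

open Asymptotics Topology

theorem le_pow_mul_of_exists_le_mul {X : Type*} {d : X → ℕ} {f : X → ℝ} {q B : ℝ} {R : ℕ}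
    (hq : 0 ≤ q) (hB : ∀ x, f x ≤ B)
    (hf : ∀ x, R ≤ d x → ∃ y, d x ≤ d y + 1 ∧ f x ≤ q * f y)
    (k : ℕ) {x : X} (hx : R + k ≤ d x) : f x ≤ q ^ k * B := by
  induction k generalizing x with
  | zero => simpa using hB x
  | succ k ih =>
    obtain ⟨y, hxy, hfy⟩ := hf x (by lia)
    calc f x ≤ q * f y := hfy
      _ ≤ q * (q ^ k * B) := by gcongr; exact ih (by lia)
      _ = q ^ (k + 1) * B := by ring

section Lattice

variable {n : ℕ}

theorem adjacent_add_unitVec (x : Lat n) (i : Fin n) : adjacent x (x + unitVec i) := by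
  simp [adjacent, unitVec, apply_ite Int.natAbs]

theorem adjacent_sub_unitVec (x : Lat n) (i : Fin n) : adjacent x (x - unitVec i) := by
  simp [adjacent, unitVec, apply_ite Int.natAbs]

theorem adjacent.latDist_le_add_one {x y : Lat n} (hxy : adjacent x y) :
    latDist x ≤ latDist y + 1 := by
  rw [latDist, latDist, ← hxy, ← Finset.sum_add_distrib]
  exact Finset.sum_le_sum fun i _ => by lia

theorem natAbs_le_latDist (x : Lat n) (i : Fin n) : (x i).natAbs ≤ latDist x :=
  Finset.single_le_sum (f := fun i => (x i).natAbs) (fun _ _ => Nat.zero_le _) (Finset.mem_univ i)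

theorem finite_setOf_latDist_eq (k : ℕ) : {x : Lat n | latDist x = k}.Finite := by
  refine (Set.finite_Icc (fun _ => -(k : ℤ)) (fun _ => (k : ℤ))).subset ?_
  rintro x rfl
  exact ⟨fun i => by have := natAbs_le_latDist x i; lia,
    fun i => by have := natAbs_le_latDist x i; lia⟩

theorem atInfty_eq_cofinite : atInfty n = cofinite := by
  rw [atInfty, ← Nat.cofinite_eq_atTop]
  exact (comap_cofinite_le latDist).antisymm
    (Tendsto.cofinite_of_finite_preimage_singleton fun k => finite_setOf_latDist_eq k).le_comap

theorem finite_support_sum_dirac {ι : Type*} [Fintype ι] (c : ℝ) (w : ι → ℝ) (p : ι → Lat n) :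
    (Function.support fun x => c * ∑ j, w j * dirac (p j) x).Finite := by
  refine (Set.finite_range p).subset fun x hx => ?_
  by_contra hxp
  refine hx ?_
  have hdirac (j) : dirac (p j) x = 0 := if_neg fun h => hxp ⟨j, h.symm⟩
  simp only [hdirac, mul_zero, Finset.sum_const_zero]

theorem sum_neighbours_eq (u : Lat n → ℝ) (x : Lat n) :
    ∑ i, (u (x + unitVec i) + u (x - unitVec i)) = 2 * n * u x + lapl u x := by
  simp only [lapl, Finset.sum_sub_distrib, Finset.sum_const, Finset.card_univ, Fintype.card_fin,
    nsmul_eq_mul]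
  ring

theorem exists_adjacent_le_of_le_sum_neighbours (hn : n ≠ 0) {w : Lat n → ℝ} {x : Lat n} {c : ℝ}
    (h : 2 * n * c ≤ ∑ i, (w (x + unitVec i) + w (x - unitVec i))) :
    ∃ y, adjacent x y ∧ c ≤ w y := by
  have : NeZero n := ⟨hn⟩
  have hsum : ∑ _i : Fin n, 2 * c ≤ ∑ i, (w (x + unitVec i) + w (x - unitVec i)) := by
    simpa [mul_left_comm, mul_assoc] using h
  obtain ⟨i, -, hi⟩ := Finset.exists_le_of_sum_le Finset.univ_nonempty hsum
  rcases le_total c (w (x + unitVec i)) with hc | hc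
  · exact ⟨_, adjacent_add_unitVec x i, hc⟩
  · exact ⟨_, adjacent_sub_unitVec x i, by linarith⟩

end Lattice

section LinearEquation

variable {n : ℕ} {u : Lat n → ℝ}

theorem exists_adjacent_mul_abs_le (hn : n ≠ 0) {x : Lat n} {q V : ℝ}
    (hV : 2 * n * (q - 1) ≤ V) (hlapl : lapl u x = V * u x) :
    ∃ y, adjacent x y ∧ q * |u x| ≤ |u y| := by
  refine exists_adjacent_le_of_le_sum_neighbours hn ?_
  calc 2 * n * (q * |u x|) = (2 * n + 2 * n * (q - 1)) * |u x| := by ring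
    _ ≤ |2 * n + V| * |u x| := by gcongr; exact le_trans (by gcongr) (le_abs_self _)
    _ = |∑ i, (u (x + unitVec i) + u (x - unitVec i))| := by
      rw [sum_neighbours_eq, hlapl, ← add_mul, abs_mul]
    _ ≤ ∑ i, (|u (x + unitVec i)| + |u (x - unitVec i)|) :=
      (Finset.abs_sum_le_sum_abs _ _).trans (Finset.sum_le_sum fun _ _ => abs_add_le _ _)

theorem isBigO_exp_of_lapl_eq_mul (hn : n ≠ 0) {V : Lat n → ℝ} {a : ℝ}
    (hu : BddAbove (Set.range fun x => |u x|))
    (hV : ∀ᶠ x in atInfty n, 2 * n * (exp a - 1) ≤ V x)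
    (hlapl : ∀ᶠ x in atInfty n, lapl u x = V x * u x) :
    u =O[atInfty n] fun x => exp (-a * latDist x) := by
  have hbasis := (atTop_basis (α := ℕ)).comap (latDist (n := n))
  obtain ⟨B, hB⟩ := hu
  obtain ⟨R, -, hR⟩ := hbasis.eventually_iff.1 (hV.and hlapl)
  have hstep (x : Lat n) (hx : R ≤ latDist x) :
      ∃ y, latDist x ≤ latDist y + 1 ∧ |u x| ≤ exp (-a) * |u y| := by
    obtain ⟨y, hxy, hle⟩ := exists_adjacent_mul_abs_le hn (hR hx).1 (hR hx).2
    refine ⟨y, hxy.latDist_le_add_one, ?_⟩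
    rwa [exp_neg, le_inv_mul_iff₀ (exp_pos a)]
  refine IsBigO.of_bound (exp (a * R) * B) (hbasis.eventually_iff.2 ⟨R, trivial, fun x hx => ?_⟩)
  obtain ⟨k, hk⟩ := Nat.exists_eq_add_of_le (show R ≤ latDist x from hx)
  calc ‖u x‖ ≤ exp (-a) ^ k * B :=
        le_pow_mul_of_exists_le_mul (exp_nonneg _) (fun x => hB ⟨x, rfl⟩) hstep k hk.ge
    _ = exp (a * R) * B * ‖exp (-a * latDist x)‖ := by
      rw [norm_of_nonneg (exp_nonneg _), mul_right_comm, ← exp_nat_mul, ← exp_add, hk]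
      push_cast
      ring_nf

end LinearEquation

theorem tendsto_dslope_exp_zero : Tendsto (dslope exp 0) (𝓝 0) (𝓝 1) := by
  have hcont : ContinuousAt (dslope exp 0) 0 := continuousAt_dslope_same.2 differentiableAt_exp
  simpa only [ContinuousAt, dslope_same, Real.deriv_exp, exp_zero] using hcont

theorem exp_sub_one_eq_dslope_mul (t : ℝ) : exp t - 1 = dslope exp 0 t * t := by
  simpa [mul_comm] using (sub_smul_dslope exp 0 t).symm

section Decay

variable {n : ℕ} {lam a : ℝ} {g h u v : Lat n → ℝ}

theorem isBigO_exp_of_lapl_eq_exp_mul (hn : n ≠ 0) (ha : 2 * n * (exp a - 1) < lam)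
    (hg : g.support.Finite)
    (hlapl : ∀ x, lapl u x = lam * exp (v x) * (exp (u x) - 1) + g x)
    (hu : Tendsto u (atInfty n) (𝓝 0)) (hv : Tendsto v (atInfty n) (𝓝 0)) :
    u =O[atInfty n] fun x => exp (-a * latDist x) := by
  have hV : Tendsto (fun x => lam * exp (v x) * dslope exp 0 (u x)) (atInfty n) (𝓝 lam) := by
    simpa using (hv.rexp.const_mul lam).mul (tendsto_dslope_exp_zero.comp hu)
  refine isBigO_exp_of_lapl_eq_mul hn ?_ (hV.eventually_const_le ha) ?_
  · exact (atInfty_eq_cofinite (n := n) ▸ hu.abs).bddAbove_range_of_cofinite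
  · rw [atInfty_eq_cofinite]
    filter_upwards [hg.eventually_cofinite_notMem] with x hx
    rw [hlapl, Function.notMem_support.1 hx, add_zero, exp_sub_one_eq_dslope_mul, mul_assoc,
      mul_assoc, mul_assoc]

theorem two_mul_mul_exp_sub_one_lt (hn : n ≠ 0) (hlam : 0 < lam)
    (ha : a < log (1 + lam / (2 * n))) : 2 * n * (exp a - 1) < lam := by
  rw [lt_log_iff_exp_lt (by positivity), ← sub_lt_iff_lt_add', lt_div_iff₀ (by positivity)] at ha
  rwa [mul_comm]

theorem IsTopSol.isBigO_exp (hn : n ≠ 0) (hlam : 0 < lam) (ha : a < log (1 + lam / (2 * n)))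
    (hg : g.support.Finite) (hh : h.support.Finite) (hsol : IsTopSol lam g h u v) :
    (fun x => (u x, v x)) =O[atInfty n] fun x => exp (-a * latDist x) := by
  obtain ⟨hu_eq, hv_eq, hu, hv⟩ := hsol
  have ha' := two_mul_mul_exp_sub_one_lt hn hlam ha
  exact (isBigO_exp_of_lapl_eq_exp_mul hn ha' hg hu_eq hu hv).prod_left
    (isBigO_exp_of_lapl_eq_exp_mul hn ha' hh hv_eq hv hu)

theorem decay_of_topological_solution_general (hn : n ≠ 0) (hlam : 0 < lam)
    (hg : g.support.Finite) (hh : h.support.Finite) (hsol : IsTopSol lam g h u v)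
    {ε : ℝ} (hε : 0 < ε) :
    ∃ C : ℝ, 0 < C ∧ ∀ x : Lat n,
      |u x| ≤ C * exp (-(log (1 + lam / (2 * n)) * (1 - ε)) * latDist x) ∧
      |v x| ≤ C * exp (-(log (1 + lam / (2 * n)) * (1 - ε)) * latDist x) := by
  have hm : 0 < log (1 + lam / (2 * n)) := log_pos (lt_add_of_pos_right 1 (by positivity))
  have hrate : log (1 + lam / (2 * n)) * (1 - ε) < log (1 + lam / (2 * n)) :=
    mul_lt_of_lt_one_right hm (sub_lt_self 1 hε)
  have hO := hsol.isBigO_exp hn hlam hrate hg hh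
  rw [atInfty_eq_cofinite] at hO
  obtain ⟨C, hC, hbound⟩ := bound_of_isBigO_cofinite hO
  refine ⟨C, hC, fun x => ?_⟩
  have hx := hbound (exp_ne_zero _ : exp (_ * (latDist x : ℝ)) ≠ 0)
  rwa [norm_of_nonneg (exp_nonneg _), norm_prod_le_iff] at hx

end Decay

/-- exponential decay of topological solutions, with rate
m = ln(1 + λ/(2n)). -/
theorem decay_of_topological_solution
    {n : ℕ} (hn : 2 ≤ n) (lam : ℝ) (hlam : 0 < lam)
    {k₁ k₂ : ℕ} (m : Fin k₁ → ℕ) (nn : Fin k₂ → ℕ)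
    (p : Fin k₁ → Lat n) (q : Fin k₂ → Lat n)
    (g h : Lat n → ℝ)
    (hg : g = fun x => 4 * Real.pi * ∑ j, (m j : ℝ) * dirac (p j) x)
    (hh : h = fun x => 4 * Real.pi * ∑ j, (nn j : ℝ) * dirac (q j) x)
    (u v : Lat n → ℝ) (hsol : IsTopSol lam g h u v)
    (ε : ℝ) (hε : ε ∈ Set.Ioo (0 : ℝ) 1) :
    ∃ C : ℝ, 0 < C ∧ ∀ x : Lat n,
      |u x| ≤ C * Real.exp (-(Real.log (1 + lam / (2 * n)) * (1 - ε)) * (latDist x : ℝ)) ∧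
      |v x| ≤ C * Real.exp (-(Real.log (1 + lam / (2 * n)) * (1 - ε)) * (latDist x : ℝ)) := by
  subst hg hh
  exact decay_of_topological_solution_general (by lia) hlam (finite_support_sum_dirac _ _ p)
    (finite_support_sum_dirac _ _ q) hsol hε.1

end CS
end
end

section
/- Let n ≥ 2 and fix g = 4π ∑_{j=1}^{k₁} m_j δ_{p_j}, h = 4π ∑_{j=1}^{k₂} n_j δ_{q_j} with m_j, n_j ∈ ℕ, and set B = 4π ∑_{j=1}^{k₁} m_j + 4π ∑_{j=1}^{k₂} n_j. Let (u_λ, v_λ) be a topological solution of Δu = λ e^v (e^u − 1) + g, Δv = λ e^u (e^v − 1) + h on ℤⁿ. If λ > 2B(2n + e^{4B}), then u_λ(x) + v_λ(x) ≥ ln(1 − 2B/λ) for all x ∈ ℤⁿ. Consequently, for any family of topological solutions (u_λ, v_λ) indexed by λ, u_λ(x) → 0 and v_λ(x) → 0 for every x ∈ ℤⁿ as λ → +∞. -/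
/-!
By the maximum principle `u, v ≤ 0`. The sum `w = u + v` satisfies `Δw = g + h - λ A` with
`A = eᵘ + eᵛ - 2eᵘ⁺ᵛ ≥ 0`. Every sublevel set `{w < t}` with `t < 0` is finite, and summing the
equation over it gives

  (increments of `w` over the edges leaving the set) + `λ ∑ A` = `∑ (g + h) ≤ B`,

where all terms on the left are nonnegative. Hence `A ≤ B / λ` at each point, and `w` increases by
at most `B` over each edge.

With `s = exp (w / 2)`, the arithmetic-geometric mean inequality gives `2 s (1 - s) ≤ A ≤ B / λ`, so
at each point either `s ≥ 1 - B / λ` or `s ≤ B / λ`. When `λ > B (1 + exp (B / 2))`, one step along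
an edge, which multiplies `s` by at most `exp (B / 2)`, cannot lead from the second alternative to
the first. A point with `s ≤ B / λ < 1` would thus start a whole ray of such points, although
`s → 1` at infinity.
-/

open Filter Real

noncomputable section

namespace CS

open scoped Topology

/-! ### Functions vanishing at infinity -/

lemma tendsto_latDist_cofinite_atTop {n : ℕ} :
    Tendsto (latDist : Lat n → ℕ) cofinite atTop := by
  refine tendsto_atTop.2 fun N => eventually_cofinite.2 ?_
  refine (Set.finite_Icc (fun _ => -(N : ℤ)) (fun _ => (N : ℤ))).subset fun x hx => ?_
  have natAbs_lt (i : Fin n) : (x i).natAbs < N :=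
    (Finset.single_le_sum (f := fun i => (x i).natAbs) (fun _ _ => Nat.zero_le _)
      (Finset.mem_univ i)).trans_lt (not_le.1 hx)
  constructor <;> intro i <;> have := natAbs_lt i <;> simp only <;> omega

lemma cofinite_le_atInfty (n : ℕ) : cofinite ≤ atInfty n :=
  tendsto_iff_comap.1 tendsto_latDist_cofinite_atTop

lemma exists_finset_mem_iff_lt {α : Type*} {w : α → ℝ} (hw : Tendsto w cofinite (𝓝 0))
    {t : ℝ} (ht : t < 0) : ∃ S : Finset α, ∀ x, x ∈ S ↔ w x < t := by
  have finite_sublevel : {x | ¬ t ≤ w x}.Finite :=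
    eventually_cofinite.1 (hw.eventually (eventually_ge_nhds ht))
  exact ⟨finite_sublevel.toFinset, fun x => by simp⟩

lemma lapl_nonpos_of_forall_le {n : ℕ} {u : Lat n → ℝ} {x : Lat n} (h : ∀ y, u y ≤ u x) :
    lapl u x ≤ 0 :=
  Finset.sum_nonpos fun i _ => by linarith [h (x + unitVec i), h (x - unitVec i)]

lemma nonpos_of_lapl_pos {n : ℕ} {u : Lat n → ℝ} (hu : Tendsto u cofinite (𝓝 0))
    (hlapl : ∀ x, 0 < u x → 0 < lapl u x) : u ≤ 0 := by
  intro x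
  by_contra! hx
  obtain ⟨z, hz⟩ : ∃ z, ∀ y, u y ≤ u z := by
    refine (continuous_of_discreteTopology (f := u)).exists_forall_ge' x ?_
    rw [cocompact_eq_cofinite]
    exact hu.eventually (eventually_le_nhds hx)
  exact (hlapl z (hx.trans_le (hz x))).not_ge (lapl_nonpos_of_forall_le hz)

lemma injective_add_nsmul_unitVec {n : ℕ} (x : Lat n) (i : Fin n) :
    Function.Injective fun k : ℕ => x + k • unitVec i := by
  intro k l hkl
  simpa [unitVec] using congrFun hkl i

lemma tendsto_add_nsmul_unitVec_cofinite {n : ℕ} (x : Lat n) (i : Fin n) :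
    Tendsto (fun k : ℕ => x + k • unitVec i) atTop cofinite :=
  Nat.cofinite_eq_atTop ▸ (injective_add_nsmul_unitVec x i).tendsto_cofinite

/-! ### Flux through the boundary of a sublevel set -/

section Flux

lemma le_of_mem_sublevel_of_notMem {α M : Type*} [LinearOrder M] {w : α → M} {t : M}
    {S : Finset α} (hS : ∀ x, x ∈ S ↔ w x < t) {x y : α} (hx : x ∈ S) (hy : y ∉ S) : w x ≤ w y :=
  (((hS x).1 hx).trans_le (not_lt.1 fun h => hy ((hS y).2 h))).le

lemma sum_boundary_sublevel_nonneg {α M : Type*} [DecidableEq α] [AddCommGroup M] [LinearOrder M]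
    [IsOrderedAddMonoid M] {w : α → M} {t : M} {S : Finset α} (hS : ∀ x, x ∈ S ↔ w x < t)
    (φ : α → α) : 0 ≤ ∑ x ∈ S with φ x ∉ S, (w (φ x) - w x) := by
  refine Finset.sum_nonneg fun x hx => sub_nonneg.2 ?_
  obtain ⟨hxS, hφx⟩ := Finset.mem_filter.1 hx
  exact le_of_mem_sublevel_of_notMem hS hxS hφx

variable {G M : Type*} [AddCommGroup G] [AddCommGroup M]

lemma sum_second_difference_eq_sum_boundary [DecidableEq G] (w : G → M) (S : Finset G) (e : G) :
    ∑ x ∈ S, (w (x + e) - w x + (w (x - e) - w x)) =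
      ∑ x ∈ S with x + e ∉ S, (w (x + e) - w x) + ∑ x ∈ S with x - e ∉ S, (w (x - e) - w x) := by
  have interior_cancels : ∑ x ∈ S with x + e ∈ S, (w (x + e) - w x) =
      -∑ x ∈ S with x - e ∈ S, (w (x - e) - w x) := by
    rw [← Finset.sum_neg_distrib]
    refine Finset.sum_nbij' (· + e) (· - e) ?_ ?_ ?_ ?_ ?_ <;> simp +contextual
  rw [Finset.sum_add_distrib, ← Finset.sum_filter_add_sum_filter_not S (fun x => x + e ∈ S),
    ← Finset.sum_filter_add_sum_filter_not S (fun x => x - e ∈ S), interior_cancels]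
  abel

variable [LinearOrder M] [IsOrderedAddMonoid M] {w : G → M} {t : M} {S : Finset G}

lemma sum_second_difference_sublevel_nonneg (hS : ∀ x, x ∈ S ↔ w x < t) (e : G) :
    0 ≤ ∑ x ∈ S, (w (x + e) - w x + (w (x - e) - w x)) := by
  classical
  rw [sum_second_difference_eq_sum_boundary]
  exact add_nonneg (sum_boundary_sublevel_nonneg hS (· + e))
    (sum_boundary_sublevel_nonneg hS (· - e))

lemma sub_le_sum_second_difference_sublevel (hS : ∀ x, x ∈ S ↔ w x < t) {x e : G} (hx : x ∈ S)
    (hxe : x + e ∉ S) :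
    w (x + e) - w x ≤ ∑ y ∈ S, (w (y + e) - w y + (w (y - e) - w y)) := by
  classical
  rw [sum_second_difference_eq_sum_boundary]
  refine le_add_of_le_of_nonneg ?_ (sum_boundary_sublevel_nonneg hS (· - e))
  refine Finset.single_le_sum (f := fun y => w (y + e) - w y) (fun y hy => ?_)
    (Finset.mem_filter.2 ⟨hx, hxe⟩)
  obtain ⟨hyS, hye⟩ := Finset.mem_filter.1 hy
  exact sub_nonneg.2 (le_of_mem_sublevel_of_notMem hS hyS hye)

end Flux

section LaplFlux

variable {n : ℕ} {w : Lat n → ℝ} {t : ℝ} {S : Finset (Lat n)}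

lemma sum_lapl_eq_sum_second_difference (w : Lat n → ℝ) (S : Finset (Lat n)) :
    ∑ x ∈ S, lapl w x =
      ∑ i, ∑ x ∈ S, (w (x + unitVec i) - w x + (w (x - unitVec i) - w x)) := by
  rw [Finset.sum_comm]
  exact Finset.sum_congr rfl fun x _ => Finset.sum_congr rfl fun i _ => by ring

lemma sum_lapl_sublevel_nonneg (hS : ∀ x, x ∈ S ↔ w x < t) : 0 ≤ ∑ x ∈ S, lapl w x := by
  rw [sum_lapl_eq_sum_second_difference]
  exact Finset.sum_nonneg fun i _ => sum_second_difference_sublevel_nonneg hS (unitVec i)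

lemma sub_le_sum_lapl_sublevel (hS : ∀ x, x ∈ S ↔ w x < t) {x : Lat n} {i : Fin n} (hx : x ∈ S)
    (hxi : x + unitVec i ∉ S) : w (x + unitVec i) - w x ≤ ∑ y ∈ S, lapl w y := by
  rw [sum_lapl_eq_sum_second_difference]
  refine (sub_le_sum_second_difference_sublevel hS hx hxi).trans ?_
  exact Finset.single_le_sum
    (f := fun j => ∑ y ∈ S, (w (y + unitVec j) - w y + (w (y - unitVec j) - w y)))
    (fun j _ => sum_second_difference_sublevel_nonneg hS (unitVec j)) (Finset.mem_univ i)

end LaplFlux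

section FluxBalance

variable {n : ℕ} {w f A : Lat n → ℝ} {B : ℝ}

lemma sum_lapl_add_sum_le (hlapl : ∀ x, lapl w x = f x - A x) (hf : 0 ≤ f) (hfB : HasSum f B)
    (S : Finset (Lat n)) : ∑ x ∈ S, lapl w x + ∑ x ∈ S, A x ≤ B := by
  simp only [hlapl, Finset.sum_sub_distrib, sub_add_cancel]
  exact sum_le_hasSum S (fun x _ => hf x) hfB

lemma le_of_lapl_eq_sub (hlapl : ∀ x, lapl w x = f x - A x) (hf : 0 ≤ f) (hfB : HasSum f B)
    (hA : 0 ≤ A) (hw : Tendsto w cofinite (𝓝 0)) {x : Lat n} (hx : w x < 0) : A x ≤ B := by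
  obtain ⟨t, hxt, ht⟩ := exists_between hx
  obtain ⟨S, hS⟩ := exists_finset_mem_iff_lt hw ht
  calc A x ≤ ∑ y ∈ S, A y := Finset.single_le_sum (fun y _ => hA y) ((hS x).2 hxt)
    _ ≤ ∑ y ∈ S, lapl w y + ∑ y ∈ S, A y := le_add_of_nonneg_left (sum_lapl_sublevel_nonneg hS)
    _ ≤ B := sum_lapl_add_sum_le hlapl hf hfB S

lemma add_unitVec_sub_le_of_lapl_eq_sub (hlapl : ∀ x, lapl w x = f x - A x) (hf : 0 ≤ f)
    (hfB : HasSum f B) (hA : 0 ≤ A) (hw : Tendsto w cofinite (𝓝 0)) (hw0 : w ≤ 0) (x : Lat n)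
    (i : Fin n) : w (x + unitVec i) - w x ≤ B := by
  rcases le_or_gt (w (x + unitVec i)) (w x) with hle | hlt
  · exact (sub_nonpos.2 hle).trans (hfB.nonneg hf)
  obtain ⟨t, hxt, hty⟩ := exists_between hlt
  obtain ⟨S, hS⟩ := exists_finset_mem_iff_lt hw (hty.trans_le (hw0 _))
  have leaves_S : x + unitVec i ∉ S := fun h => hty.not_gt ((hS _).1 h)
  calc w (x + unitVec i) - w x
      ≤ ∑ y ∈ S, lapl w y := sub_le_sum_lapl_sublevel hS ((hS x).2 hxt) leaves_S
    _ ≤ ∑ y ∈ S, lapl w y + ∑ y ∈ S, A y :=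
        le_add_of_nonneg_right (Finset.sum_nonneg fun y _ => hA y)
    _ ≤ B := sum_lapl_add_sum_le hlapl hf hfB S

end FluxBalance

/-! ### The absorption term -/

/-- The absorption term `eᵘ + eᵛ - 2eᵘ⁺ᵛ` of the equation for `u + v`, in the factored form in which
the two equations of the system produce it. -/
def absorption (a b : ℝ) : ℝ := exp b * (1 - exp a) + exp a * (1 - exp b)

lemma absorption_nonneg {a b : ℝ} (ha : a ≤ 0) (hb : b ≤ 0) : 0 ≤ absorption a b :=
  add_nonneg (mul_nonneg (exp_pos b).le (sub_nonneg.2 (exp_le_one_iff.2 ha)))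
    (mul_nonneg (exp_pos a).le (sub_nonneg.2 (exp_le_one_iff.2 hb)))

lemma two_mul_exp_half_mul_le_absorption (a b : ℝ) :
    2 * exp ((a + b) / 2) * (1 - exp ((a + b) / 2)) ≤ absorption a b := by
  have exp_eq_sq (c : ℝ) : exp c = exp (c / 2) ^ 2 := by rw [← exp_nat_mul]; ring_nf
  rw [absorption, add_div, exp_add, exp_eq_sq a, exp_eq_sq b]
  linarith [two_mul_le_add_sq (exp (a / 2)) (exp (b / 2))]

lemma one_sub_le_or_le_of_two_mul_mul_one_sub_le {s ε : ℝ} (hs0 : 0 ≤ s) (hs1 : s ≤ 1)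
    (h : 2 * s * (1 - s) ≤ ε) : 1 - ε ≤ s ∨ s ≤ ε := by
  rcases le_total (1 / 2) s with hs | hs
  · left; nlinarith
  · right; nlinarith

/-! ### Topological solutions -/

lemma lapl_add {n : ℕ} (u v : Lat n → ℝ) (x : Lat n) :
    lapl (u + v) x = lapl u x + lapl v x := by
  simp only [lapl, Pi.add_apply, ← Finset.sum_add_distrib]
  exact Finset.sum_congr rfl fun i _ => by ring

namespace IsTopSol

variable {n : ℕ} {lam B : ℝ} {g h u v : Lat n → ℝ}

lemma symm (hs : IsTopSol lam g h u v) : IsTopSol lam h g v u :=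
  ⟨hs.2.1, hs.1, hs.2.2.2, hs.2.2.1⟩

lemma left_nonpos (hs : IsTopSol lam g h u v) (hlam : 0 < lam) (hg : 0 ≤ g) : u ≤ 0 := by
  refine nonpos_of_lapl_pos (hs.2.2.1.mono_left (cofinite_le_atInfty n)) fun x hx => ?_
  rw [hs.1]
  have one_lt_exp : 1 < exp (u x) := one_lt_exp_iff.2 hx
  exact add_pos_of_pos_of_nonneg
    (mul_pos (mul_pos hlam (exp_pos _)) (sub_pos.2 one_lt_exp)) (hg x)

lemma right_nonpos (hs : IsTopSol lam g h u v) (hlam : 0 < lam) (hh : 0 ≤ h) : v ≤ 0 :=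
  hs.symm.left_nonpos hlam hh

lemma tendsto_add (hs : IsTopSol lam g h u v) : Tendsto (u + v) cofinite (𝓝 0) := by
  have tendsto_atInfty : Tendsto (u + v) (atInfty n) (𝓝 (0 + 0)) := hs.2.2.1.add hs.2.2.2
  exact add_zero (0 : ℝ) ▸ tendsto_atInfty.mono_left (cofinite_le_atInfty n)

lemma lapl_add_eq (hs : IsTopSol lam g h u v) (x : Lat n) :
    lapl (u + v) x = (g + h) x - lam * absorption (u x) (v x) := by
  rw [lapl_add, hs.1, hs.2.1, absorption, Pi.add_apply]
  ring

lemma mul_absorption_nonneg (hs : IsTopSol lam g h u v) (hlam : 0 < lam) (hg : 0 ≤ g)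
    (hh : 0 ≤ h) : 0 ≤ fun x => lam * absorption (u x) (v x) := fun x =>
  mul_nonneg hlam.le (absorption_nonneg (hs.left_nonpos hlam hg x) (hs.right_nonpos hlam hh x))

lemma one_sub_div_le_or_le_div (hs : IsTopSol lam g h u v) (hlam : 0 < lam) (hg : 0 ≤ g)
    (hh : 0 ≤ h) (hB : HasSum (g + h) B) (x : Lat n) :
    1 - B / lam ≤ exp ((u + v) x / 2) ∨ exp ((u + v) x / 2) ≤ B / lam := by
  have hB0 : 0 ≤ B / lam := div_nonneg (hB.nonneg (add_nonneg hg hh)) hlam.le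
  have hw : (u + v) x ≤ 0 :=
    add_nonpos (hs.left_nonpos hlam hg x) (hs.right_nonpos hlam hh x)
  rcases hw.eq_or_lt with hx | hx
  · left
    rw [hx, zero_div, exp_zero]
    linarith
  · refine one_sub_le_or_le_of_two_mul_mul_one_sub_le (exp_pos _).le
      (exp_le_one_iff.2 (by linarith)) ((two_mul_exp_half_mul_le_absorption _ _).trans ?_)
    rw [le_div_iff₀' hlam]
    exact le_of_lapl_eq_sub hs.lapl_add_eq (add_nonneg hg hh) hB
      (hs.mul_absorption_nonneg hlam hg hh) hs.tendsto_add hx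

lemma exp_half_add_unitVec_le (hs : IsTopSol lam g h u v) (hlam : 0 < lam) (hg : 0 ≤ g)
    (hh : 0 ≤ h) (hB : HasSum (g + h) B) (x : Lat n) (i : Fin n) :
    exp ((u + v) (x + unitVec i) / 2) ≤ exp (B / 2) * exp ((u + v) x / 2) := by
  have increment_le : (u + v) (x + unitVec i) - (u + v) x ≤ B :=
    add_unitVec_sub_le_of_lapl_eq_sub hs.lapl_add_eq (add_nonneg hg hh) hB
      (hs.mul_absorption_nonneg hlam hg hh) hs.tendsto_add
      (add_nonpos (hs.left_nonpos hlam hg) (hs.right_nonpos hlam hh)) x i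
  rw [← exp_add, exp_le_exp]
  linarith

lemma exp_half_add_unitVec_le_div (hs : IsTopSol lam g h u v) (hg : 0 ≤ g) (hh : 0 ≤ h)
    (hB : HasSum (g + h) B) (hBlam : B * (1 + exp (B / 2)) < lam) {x : Lat n}
    (hx : exp ((u + v) x / 2) ≤ B / lam) (i : Fin n) :
    exp ((u + v) (x + unitVec i) / 2) ≤ B / lam := by
  have hB0 : 0 ≤ B := hB.nonneg (add_nonneg hg hh)
  have hlam : 0 < lam := hBlam.trans_le' (by positivity)
  refine (hs.one_sub_div_le_or_le_div hlam hg hh hB _).resolve_left (not_le.2 ?_)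
  calc exp ((u + v) (x + unitVec i) / 2)
      ≤ exp (B / 2) * exp ((u + v) x / 2) := hs.exp_half_add_unitVec_le hlam hg hh hB x i
    _ ≤ exp (B / 2) * (B / lam) := by gcongr
    _ < 1 - B / lam := by
      have : B * (1 + exp (B / 2)) / lam < 1 := (div_lt_one hlam).2 hBlam
      linarith [show B * (1 + exp (B / 2)) / lam = B / lam + exp (B / 2) * (B / lam) by ring]

lemma one_sub_div_le_exp_half (hn : 0 < n) (hs : IsTopSol lam g h u v) (hg : 0 ≤ g) (hh : 0 ≤ h)
    (hB : HasSum (g + h) B) (hBlam : B * (1 + exp (B / 2)) < lam) (x : Lat n) :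
    1 - B / lam ≤ exp ((u + v) x / 2) := by
  have hB0 : 0 ≤ B := hB.nonneg (add_nonneg hg hh)
  have hlam : 0 < lam := hBlam.trans_le' (by positivity)
  have hε : B / lam < 1 :=
    (div_lt_one hlam).2 (hBlam.trans_le' (le_mul_of_one_le_right hB0 (by simp [(exp_pos _).le])))
  refine (hs.one_sub_div_le_or_le_div hlam hg hh hB x).resolve_right fun hx => ?_
  let i : Fin n := ⟨0, hn⟩
  have le_on_ray (k : ℕ) : exp ((u + v) (x + k • unitVec i) / 2) ≤ B / lam := by
    induction k with
    | zero => simpa only [zero_nsmul, add_zero] using hx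
    | succ k ih =>
      rw [succ_nsmul, ← add_assoc]
      exact hs.exp_half_add_unitVec_le_div hg hh hB hBlam ih i
  have tendsto_one :
      Tendsto (fun k : ℕ => exp ((u + v) (x + k • unitVec i) / 2)) atTop (𝓝 1) := by
    simpa using
      ((hs.tendsto_add.comp (tendsto_add_nsmul_unitVec_cofinite x i)).div_const 2).rexp
  exact hε.not_ge (le_of_tendsto' tendsto_one le_on_ray)

lemma log_one_sub_two_mul_div_le_add (hn : 0 < n) (hs : IsTopSol lam g h u v) (hg : 0 ≤ g)
    (hh : 0 ≤ h) (hB : HasSum (g + h) B) (hBlam : B * (1 + exp (B / 2)) < lam) (x : Lat n) :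
    log (1 - 2 * B / lam) ≤ u x + v x := by
  have hB0 : 0 ≤ B := hB.nonneg (add_nonneg hg hh)
  have hlam : 0 < lam := hBlam.trans_le' (by positivity)
  have two_mul_div_lt_one : 2 * B / lam < 1 := by
    have := one_le_exp (div_nonneg hB0 zero_le_two)
    rw [div_lt_one hlam]
    nlinarith
  have exp_half_sq : exp ((u + v) x / 2) ^ 2 = exp (u x + v x) := by
    rw [← exp_nat_mul, Pi.add_apply]
    ring_nf
  rw [log_le_iff_le_exp (sub_pos.2 two_mul_div_lt_one), ← exp_half_sq]
  calc 1 - 2 * B / lam ≤ (1 - B / lam) ^ 2 := by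
        linarith [sq_nonneg (B / lam), show 2 * B / lam = 2 * (B / lam) by ring]
    _ ≤ exp ((u + v) x / 2) ^ 2 := by
        refine pow_le_pow_left₀ ?_ (hs.one_sub_div_le_exp_half hn hg hh hB hBlam x) 2
        linarith [div_nonneg hB0 hlam.le, show 2 * B / lam = 2 * (B / lam) by ring]

end IsTopSol

lemma tendsto_log_one_sub_div_atTop (c : ℝ) :
    Tendsto (fun lam : ℝ => log (1 - c / lam)) atTop (𝓝 0) := by
  have tendsto_one : Tendsto (fun lam : ℝ => 1 - c / lam) atTop (𝓝 1) := by
    simpa using (tendsto_const_nhds (x := (1 : ℝ))).sub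
      (tendsto_const_nhds (x := c).div_atTop tendsto_id)
  simpa using tendsto_one.log one_ne_zero

lemma tendstoUniformly_left_zero {n : ℕ} (hn : 0 < n) {B : ℝ} {g h : Lat n → ℝ} (hg : 0 ≤ g)
    (hh : 0 ≤ h) (hB : HasSum (g + h) B) {U V : ℝ → Lat n → ℝ}
    (hUV : ∀ᶠ lam in atTop, IsTopSol lam g h (U lam) (V lam)) : TendstoUniformly U 0 atTop := by
  refine Metric.tendstoUniformly_iff.2 fun δ hδ => ?_
  filter_upwards [hUV, eventually_gt_atTop 0, eventually_gt_atTop (B * (1 + exp (B / 2))),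
    (tendsto_log_one_sub_div_atTop (2 * B)).eventually (lt_mem_nhds (neg_lt_zero.2 hδ))]
    with lam hs hlam hBlam hlog x
  have lower : log (1 - 2 * B / lam) ≤ U lam x + V lam x :=
    hs.log_one_sub_two_mul_div_le_add hn hg hh hB hBlam x
  have hU : U lam x ≤ 0 := hs.left_nonpos hlam hg x
  have hV : V lam x ≤ 0 := hs.right_nonpos hlam hh x
  rw [Pi.zero_apply, dist_zero_left, norm_of_nonpos hU]
  linarith

/-! ### Vortex sources -/

section Source

variable {n : ℕ} {ι : Type*} [Fintype ι]

lemma source_nonneg {c : ℝ} (hc : 0 ≤ c) {m : ι → ℝ} (hm : 0 ≤ m) (p : ι → Lat n) :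
    0 ≤ fun x => c * ∑ j, m j * dirac (p j) x := by
  refine fun x => mul_nonneg hc (Finset.sum_nonneg fun j _ => mul_nonneg (hm j) ?_)
  unfold dirac
  positivity

lemma hasSum_dirac (p : Lat n) : HasSum (dirac p) 1 := hasSum_ite_eq p 1

lemma hasSum_source (c : ℝ) (m : ι → ℝ) (p : ι → Lat n) :
    HasSum (fun x => c * ∑ j, m j * dirac (p j) x) (c * ∑ j, m j) := by
  simpa using (hasSum_sum fun j (_ : j ∈ Finset.univ) =>
    (hasSum_dirac (p j)).mul_left (m j)).mul_left c

end Source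

lemma mul_one_add_exp_half_le (n : ℕ) {B : ℝ} (hB : 0 ≤ B) :
    B * (1 + exp (B / 2)) ≤ 2 * B * (2 * (n : ℝ) + exp (4 * B)) := by
  have one_le_exp_four_mul : 1 ≤ exp (4 * B) := one_le_exp (by positivity)
  have exp_half_le : exp (B / 2) ≤ exp (4 * B) := exp_le_exp.2 (by linarith)
  rw [mul_comm 2 B, mul_assoc]
  gcongr
  linarith [n.cast_nonneg (α := ℝ)]

theorem lower_bound_and_limit_at_infinity_general {n : ℕ} (hn : 0 < n) {g h : Lat n → ℝ}
    (hg : 0 ≤ g) (hh : 0 ≤ h) {B : ℝ} (hB : HasSum (g + h) B) :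
    (∀ (lam : ℝ) (u v : Lat n → ℝ), IsTopSol lam g h u v → B * (1 + exp (B / 2)) < lam →
        ∀ x, log (1 - 2 * B / lam) ≤ u x + v x) ∧
    (∀ U V : ℝ → Lat n → ℝ, (∀ᶠ lam in atTop, IsTopSol lam g h (U lam) (V lam)) →
        TendstoUniformly U 0 atTop ∧ TendstoUniformly V 0 atTop) :=
  ⟨fun _ _ _ hs hBlam => hs.log_one_sub_two_mul_div_le_add hn hg hh hB hBlam, fun _ _ hUV =>
    ⟨tendstoUniformly_left_zero hn hg hh hB hUV,
      tendstoUniformly_left_zero hn hh hg (add_comm g h ▸ hB) (hUV.mono fun _ hs => hs.symm)⟩⟩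

/-- lower bound u_λ + v_λ ≥ ln(1 − 2B/λ) for λ > 2B(2n + e^{4B}),
and, consequently, u_λ → 0 and v_λ → 0 pointwise as λ → +∞. -/
theorem lower_bound_and_limit_at_infinity
    {n : ℕ} (hn : 2 ≤ n)
    {k₁ k₂ : ℕ} (m : Fin k₁ → ℕ) (nn : Fin k₂ → ℕ)
    (p : Fin k₁ → Lat n) (q : Fin k₂ → Lat n)
    (g h : Lat n → ℝ)
    (hg : g = fun x => 4 * Real.pi * ∑ j, (m j : ℝ) * dirac (p j) x)
    (hh : h = fun x => 4 * Real.pi * ∑ j, (nn j : ℝ) * dirac (q j) x)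
    (B : ℝ)
    (hB : B = 4 * Real.pi * ∑ j, (m j : ℝ) + 4 * Real.pi * ∑ j, (nn j : ℝ)) :
    (∀ (lam : ℝ) (u v : Lat n → ℝ), IsTopSol lam g h u v →
        2 * B * (2 * (n : ℝ) + Real.exp (4 * B)) < lam →
        ∀ x, Real.log (1 - 2 * B / lam) ≤ u x + v x) ∧
    (∀ U V : ℝ → Lat n → ℝ,
        (∀ lam : ℝ, 0 < lam → IsTopSol lam g h (U lam) (V lam)) →
        ∀ x, Filter.Tendsto (fun lam => U lam x) Filter.atTop (nhds 0) ∧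
             Filter.Tendsto (fun lam => V lam x) Filter.atTop (nhds 0)) := by
  have hg0 : 0 ≤ g := hg ▸ source_nonneg (by positivity) (fun j => (m j).cast_nonneg) p
  have hh0 : 0 ≤ h := hh ▸ source_nonneg (by positivity) (fun j => (nn j).cast_nonneg) q
  have hgh : HasSum (g + h) B := by
    rw [hg, hh, hB]
    exact (hasSum_source _ _ p).add (hasSum_source _ _ q)
  obtain ⟨bound, limit⟩ := lower_bound_and_limit_at_infinity_general (by omega : 0 < n) hg0 hh0 hgh
  refine ⟨fun lam u v hs hlam => bound lam u v hs ?_, fun U V hUV x => ?_⟩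
  · exact (mul_one_add_exp_half_le n (hgh.nonneg (add_nonneg hg0 hh0))).trans_lt hlam
  · exact (limit U V ((eventually_gt_atTop 0).mono hUV)).imp
      (fun hU => hU.tendsto_at x) (fun hV => hV.tendsto_at x)

end CS
end
end
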